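/- Let n ≥ k ≥ 2 be integers and let λ ∈ (0,1] satisfy λ ≥ k²/n. Let s be a λ-dispersed preference model on n items. Then every x ∈ Δ(n) with ‖x − x_U‖_∞ ≤ (k−1)/(n(n−1)) lies in IRD(v) for every v ∈ Δ(n); that is, the ℓ∞-ball of radius (k−1)/(n(n−1)) around the uniform vector, intersected with Δ(n), is contained in EIRD. -/

import Mathlib

open Finset

/-- The choice distribution induced by preference model `s` at memory vector `v`
when menu `K` is shown. -/
noncomputable def menuDist {n : ℕ} (s : (Fin n → ℝ) → Fin n → ℝ)
    (v : Fin n → ℝ) (K : Finset (Fin n)) : Fin n → ℝ :=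
  fun i => if i ∈ K then s v i / ∑ j ∈ K, s v j else 0

/-- The set of instantaneously realizable distributions at memory vector `v`. -/
noncomputable def IRD {n : ℕ} (k : ℕ) (s : (Fin n → ℝ) → Fin n → ℝ)
    (v : Fin n → ℝ) : Set (Fin n → ℝ) :=
  convexHull ℝ { p | ∃ K : Finset (Fin n), K.card = k ∧ p = menuDist s v K }

/-!
A probability vector `x` is a mixture of menu distributions `p_K ∝ s · 1_K` as soon as `w ∝ x / s`,
scaled to total mass `k`, is a mixture of the indicators `1_K` with `|K| = k`: multiplying by `s`
and renormalizing is a linear-fractional map, and such maps send convex hulls into convex hulls.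
The mixtures of these indicators fill the hypersimplex `{0 ≤ w ≤ 1, ∑ w = k}`. This follows from
Birkhoff's theorem: fix a `k`-set `K` and give each column in `K` the entries `w / k` and each
other column the entries `(1 - w) / (n - k)`. The matrix is doubly stochastic, and summing its
columns over `K` returns `w`, whereas for a permutation matrix that sum is the indicator of a
`k`-set.

The remaining condition `k (x i / s i) ≤ ∑ j, x j / s j` holds because the left side is at most
`k x i / λ ≤ 1`, while the right side is at least `∑ j, x j = 1`.
-/

section ConvexHull

variable {R E F ι : Type*} [Field R] [LinearOrder R] [IsStrictOrderedRing R]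

lemma inv_smul_map_mem_convexHull_image [AddCommGroup E] [Module R E] [AddCommGroup F] [Module R F]
    (f : E →ₗ[R] R) (g : E →ₗ[R] F) {S : Set E} (hS : ∀ z ∈ S, 0 < f z) {w : E}
    (hw : w ∈ convexHull R S) :
    (f w)⁻¹ • g w ∈ convexHull R ((fun z => (f z)⁻¹ • g z) '' S) := by
  set T := convexHull R ((fun z => (f z)⁻¹ • g z) '' S)
  suffices hsub : convexHull R S ⊆ {z | 0 < f z ∧ (f z)⁻¹ • g z ∈ T} from (hsub hw).2
  refine convexHull_min (fun z hz => ⟨hS z hz, subset_convexHull R _ ⟨z, hz, rfl⟩⟩) ?_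
  rintro x ⟨hx, hxT⟩ y ⟨hy, hyT⟩ a b ha hb hab
  have hpos : 0 < f (a • x + b • y) := by
    simpa using convex_Ioi (0 : R) hx hy ha hb hab
  refine ⟨hpos, ?_⟩
  have hsum : a * f x + b * f y = f (a • x + b • y) := by simp
  have hcomb : (f (a • x + b • y))⁻¹ • g (a • x + b • y) =
      (a * f x / f (a • x + b • y)) • (f x)⁻¹ • g x +
        (b * f y / f (a • x + b • y)) • (f y)⁻¹ • g y := by
    rw [map_add g, map_smul, map_smul, smul_add]
    simp only [smul_smul]
    congr 2 <;> field_simp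
  rw [hcomb]
  exact convex_convexHull R _ hxT hyT (by positivity) (by positivity)
    (by rw [← add_div, hsum, div_self hpos.ne'])

variable (R ι) in
/-- The hypersimplex: the points of the cube `[0, 1]^ι` whose coordinates sum to `k`. It is the
polytope spanned by the indicators of the menus of size `k`, but is encoded here by its facet
inequalities, which are easy to verify for a given point. -/
def hypersimplex [Fintype ι] (k : ℕ) : Set (ι → R) :=
  {w | (∀ i, w i ∈ Set.Icc 0 1) ∧ ∑ i, w i = k}

lemma le_card_of_mem_hypersimplex [Fintype ι] {k : ℕ} {w : ι → R} (hw : w ∈ hypersimplex R ι k) :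
    k ≤ Fintype.card ι := by
  have hsum : ∑ i, w i ≤ ∑ _i : ι, 1 := sum_le_sum fun i _ => (hw.1 i).2
  rw [hw.2] at hsum
  simpa using hsum

lemma exists_mem_doublyStochastic_mulVec_eq_of_mem_hypersimplex [Fintype ι] [DecidableEq ι]
    {K : Finset ι} {w : ι → R} (hw : w ∈ hypersimplex R ι #K) :
    ∃ A ∈ doublyStochastic R ι, A.mulVec (Set.indicator K 1) = w := by
  -- If `K` or `Kᶜ` is empty, then `w` is constantly `0` or `1`, so the division by `0` is harmless.
  have hin (i) : (#K : R) * (w i / #K) = w i := by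
    refine mul_div_cancel_of_imp' fun hK => ?_
    exact (sum_eq_zero_iff_of_nonneg fun i _ => (hw.1 i).1).1 (hw.2.trans hK) i (mem_univ i)
  have hsumc : ∑ i, (1 - w i) = #Kᶜ := by
    simp [sum_sub_distrib, hw.2, card_compl, Nat.cast_sub K.card_le_univ]
  have hout (i) : (#Kᶜ : R) * ((1 - w i) / #Kᶜ) = 1 - w i := by
    refine mul_div_cancel_of_imp' fun hK => ?_
    exact (sum_eq_zero_iff_of_nonneg fun i _ => sub_nonneg.2 (hw.1 i).2).1 (hsumc.trans hK) i
      (mem_univ i)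
  refine ⟨.of fun i j => if j ∈ K then w i / #K else (1 - w i) / #Kᶜ,
    mem_doublyStochastic_iff_sum.2 ⟨fun i j => ?_, fun i => ?_, fun j => ?_⟩, ?_⟩
  · have hnonneg := (hw.1 i).1
    have hnonneg_sub := sub_nonneg.2 (hw.1 i).2
    simp only [Matrix.of_apply]
    split_ifs <;> positivity
  · simp only [Matrix.of_apply]
    rw [← sum_add_sum_compl K, sum_congr rfl fun j hj => if_pos hj,
      sum_congr rfl fun j hj => if_neg (mem_compl.1 hj)]
    simp only [sum_const, nsmul_eq_mul, hin, hout]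
    ring
  · by_cases hj : j ∈ K
    · have hK : (#K : R) ≠ 0 := Nat.cast_ne_zero.2 (card_ne_zero_of_mem hj)
      simp [hj, ← sum_div, hw.2, hK]
    · have hK : (#Kᶜ : R) ≠ 0 := Nat.cast_ne_zero.2 (card_ne_zero_of_mem (mem_compl.2 hj))
      simp only [Matrix.of_apply, hj, if_false, ← sum_div, hsumc, div_self hK]
  · ext i
    calc _ = ∑ j ∈ K, if j ∈ K then w i / #K else (1 - w i) / #Kᶜ := by
          simp [Matrix.mulVec, dotProduct, Set.indicator_apply]
      _ = ∑ _j ∈ K, w i / #K := sum_congr rfl fun j hj => if_pos hj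
      _ = w i := by rw [sum_const, nsmul_eq_mul, hin]

lemma hypersimplex_subset_convexHull_indicator [Fintype ι] (k : ℕ) :
    hypersimplex R ι k ⊆ convexHull R {w | ∃ K : Finset ι, #K = k ∧ w = Set.indicator K 1} := by
  classical
  intro w hw
  obtain ⟨K, -, rfl⟩ := exists_subset_card_eq (s := univ) (le_card_of_mem_hypersimplex hw)
  obtain ⟨A, hA, rfl⟩ := exists_mem_doublyStochastic_mulVec_eq_of_mem_hypersimplex hw
  let L : Matrix ι ι R →ₗ[R] ι → R := (Matrix.mulVecBilin R R).flip (Set.indicator K 1)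
  rw [← SetLike.mem_coe, doublyStochastic_eq_convexHull_permMatrix] at hA
  have hLA : L A ∈ convexHull R (L '' {σ.permMatrix R | σ : Equiv.Perm ι}) :=
    L.image_convexHull _ ▸ Set.mem_image_of_mem L hA
  refine convexHull_mono ?_ hLA
  rintro _ ⟨_, ⟨σ, rfl⟩, rfl⟩
  refine ⟨K.map σ.symm.toEmbedding, card_map _, ?_⟩
  ext i
  simp [L, Matrix.permMatrix_mulVec, Set.indicator_apply]

end ConvexHull

lemma le_div_of_abs_sub_one_div_le {a k n : ℝ} (hk : 1 ≤ k) (hn : 2 ≤ n)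
    (ha : |a - 1 / n| ≤ (k - 1) / (n * (n - 1))) : a ≤ k / n := by
  have hradius : (k - 1) / (n * (n - 1)) ≤ (k - 1) / n :=
    div_le_div_of_nonneg_left (by linarith) (by linarith)
      (le_mul_of_one_le_right (by linarith) (by linarith))
  calc a ≤ 1 / n + (k - 1) / n := sub_le_iff_le_add'.1 ((le_abs_self _).trans (ha.trans hradius))
    _ = k / n := by ring

section IRD

variable {n k : ℕ} {s : (Fin n → ℝ) → Fin n → ℝ} {v x : Fin n → ℝ}

lemma menuDist_eq_inv_smul_indicator (s : (Fin n → ℝ) → Fin n → ℝ) (v : Fin n → ℝ)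
    (K : Finset (Fin n)) :
    menuDist s v K = (s v ⬝ᵥ Set.indicator K 1)⁻¹ • (s v * Set.indicator K 1) := by
  ext i
  by_cases hi : i ∈ K <;> simp [menuDist, dotProduct, Set.indicator_apply, hi, div_eq_inv_mul]

lemma inv_smul_mul_mem_IRD (hk : 0 < k) (hs : ∀ i, 0 < s v i) {w : Fin n → ℝ}
    (hw : w ∈ hypersimplex ℝ (Fin n) k) : (s v ⬝ᵥ w)⁻¹ • (s v * w) ∈ IRD k s v := by
  have hpos : ∀ z ∈ {w | ∃ K : Finset (Fin n), #K = k ∧ w = Set.indicator K (1 : Fin n → ℝ)},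
      0 < dotProductBilin ℝ ℝ (s v) z := by
    rintro _ ⟨K, rfl, rfl⟩
    simpa [dotProduct, Set.indicator_apply] using sum_pos (fun i _ => hs i) (card_pos.1 hk)
  refine convexHull_mono ?_ (inv_smul_map_mem_convexHull_image (dotProductBilin ℝ ℝ (s v))
    (LinearMap.mulLeft ℝ (s v)) hpos (hypersimplex_subset_convexHull_indicator k hw))
  rintro _ ⟨_, ⟨K, hK, rfl⟩, rfl⟩
  exact ⟨K, hK, (menuDist_eq_inv_smul_indicator s v K).symm⟩

lemma mem_IRD_of_mul_div_le_sum (hk : 0 < k) (hs : ∀ i, 0 < s v i)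
    (hx : x ∈ stdSimplex ℝ (Fin n))
    (hle : ∀ i, k * (x i / s v i) ≤ ∑ j, x j / s v j) : x ∈ IRD k s v := by
  set Y := ∑ j, x j / s v j with hY
  have hy (i) : 0 ≤ x i / s v i := div_nonneg (hx.1 i) (hs i).le
  have hYpos : 0 < Y := by
    obtain ⟨i, -, hi⟩ : ∃ i ∈ univ, 0 < x i :=
      exists_lt_of_sum_lt (f := fun _ => (0 : ℝ)) (by simp [hx.2])
    exact sum_pos' (fun j _ => hy j) ⟨i, mem_univ i, div_pos hi (hs i)⟩
  have hk0 : (k : ℝ) / Y ≠ 0 := by positivity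
  let w : Fin n → ℝ := fun i => k / Y * (x i / s v i)
  have hw : w ∈ hypersimplex ℝ (Fin n) k := by
    refine ⟨fun i => ⟨mul_nonneg (by positivity) (hy i), ?_⟩, ?_⟩
    · exact (div_mul_eq_mul_div _ _ _).trans_le ((div_le_one hYpos).2 (hle i))
    · rw [← mul_sum, ← hY, div_mul_cancel₀ _ hYpos.ne']
  have hsw : s v * w = ((k : ℝ) / Y) • x := by
    ext i
    have hsi := (hs i).ne'
    simp only [w, Pi.mul_apply, Pi.smul_apply, smul_eq_mul]
    field_simp
  have htotal : s v ⬝ᵥ w = k / Y := by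
    calc s v ⬝ᵥ w = ∑ i, (s v * w) i := rfl
      _ = ∑ i, k / Y * x i := by rw [hsw]; rfl
      _ = k / Y := by rw [← mul_sum, hx.2, mul_one]
  have hmem := inv_smul_mul_mem_IRD hk hs hw
  rwa [htotal, hsw, inv_smul_smul₀ hk0] at hmem

theorem linf_ball_subset_EIRD_general (hk : 0 < k) {lam : ℝ} (hlam : 0 < lam)
    (hs : ∀ i, lam ≤ s v i ∧ s v i ≤ 1) (hx : x ∈ stdSimplex ℝ (Fin n))
    (hle : ∀ i, x i ≤ lam / k) : x ∈ IRD k s v := by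
  have hspos (i) : 0 < s v i := hlam.trans_le (hs i).1
  refine mem_IRD_of_mul_div_le_sum hk hspos hx fun i => ?_
  calc k * (x i / s v i) = k * x i / s v i := (mul_div_assoc _ _ _).symm
    _ ≤ 1 := (div_le_one (hspos i)).2
        (((le_div_iff₀' (Nat.cast_pos.2 hk)).1 (hle i)).trans (hs i).1)
    _ = ∑ j, x j := hx.2.symm
    _ ≤ ∑ j, x j / s v j := sum_le_sum fun j _ => le_div_self (hx.1 j) (hspos j) (hs j).2

end IRD

/-- For a `λ`-dispersed preference model with `λ ≥ k²/n`, every point of the simplex within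
`ℓ∞`-distance `(k−1)/(n(n−1))` of the uniform vector lies in `IRD(v)` for every memory
vector `v`; i.e., this `ℓ∞`-ball (intersected with the simplex) is contained in `EIRD`. -/
theorem linf_ball_subset_EIRD {n k : ℕ} (hk : 2 ≤ k) (hkn : k ≤ n)
    (lam : ℝ) (hlam0 : 0 < lam) (hlam1 : lam ≤ 1)
    (hlamn : (k : ℝ) ^ 2 / n ≤ lam)
    (s : (Fin n → ℝ) → Fin n → ℝ)
    (hdisp : ∀ v ∈ stdSimplex ℝ (Fin n), ∀ i, lam ≤ s v i ∧ s v i ≤ 1) :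
    ∀ x ∈ stdSimplex ℝ (Fin n),
      (∀ i : Fin n, |x i - 1 / n| ≤ ((k : ℝ) - 1) / (n * ((n : ℝ) - 1))) →
      ∀ v ∈ stdSimplex ℝ (Fin n), x ∈ IRD k s v := by
  intro x hx hball v hv
  have hk2 : (2 : ℝ) ≤ k := by exact_mod_cast hk
  have hkn' : (k : ℝ) ≤ n := by exact_mod_cast hkn
  refine linf_ball_subset_EIRD_general (by omega) hlam0 (hdisp v hv) hx fun i => ?_
  calc x i ≤ k / n := le_div_of_abs_sub_one_div_le (by linarith) (by linarith) (hball i)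
    _ = (k : ℝ) ^ 2 / n / k := by field_simp
    _ ≤ lam / k := by gcongr
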